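/- Let Z ⊆ ℝ^{n_z}, H ∈ ℕ, maps f_k : ℝⁿ → ℝⁿ for k < H, and for each k ≤ H data (c_k ∈ ℝⁿ, A_k a real n×n_z matrix, l_k ≤ u_k in ℝⁿ) defining the Taylor-model sets S_k = {c_k + A_k z + r : z ∈ Z, l_k ≤ r ≤ u_k}. Suppose for each k < H there are a real n×n matrix W_k and vectors b̲_k, b̄_k ∈ ℝⁿ with W_k x + b̲_k ≤ f_k(x) ≤ W_k x + b̄_k componentwise for all x ∈ S_k, and that the data satisfy the recursion c_{k+1} = W_k c_k, A_{k+1} = W_k A_k, l_{k+1} = b̲_k + W_k⁺ l_k + W_k⁻ u_k, and u_{k+1} = b̄_k + W_k⁺ u_k + W_k⁻ l_k. Then for every z ∈ Z and every r₀ with l₀ ≤ r₀ ≤ u₀, the trajectory defined by x_0 = c_0 + A_0 z + r₀ and x_{k+1} = f_k(x_k) satisfies: for every k ≤ H there exists r_k with l_k ≤ r_k ≤ u_k such that x_k = c_k + A_k z + r_k. -/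

import Mathlib

/-! Each step is affine up to a bounded error: writing `x k = c k + A k z + r`, the remainder
`r' = x (k + 1) - c (k + 1) - A (k + 1) z` equals `W k r` plus the gap `f k (x k) - W k (x k)`.
The gap lies in `[bl k, bu k]`, and `W k r` lies in the interval image of `[l k, u k]` obtained by
splitting `W k` into positive and negative parts (`mul_mem_interval`, summed over a row).
Induction on `k` then keeps the same `z` throughout. -/

/-- Interval multiplication by a scalar `w`, split into its positive and negative parts. -/
lemma mul_mem_interval (w : ℝ) {a b t : ℝ} (ha : a ≤ t) (hb : t ≤ b) :
    max w 0 * a + min w 0 * b ≤ w * t ∧ w * t ≤ max w 0 * b + min w 0 * a := by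
  rcases le_total w 0 with h | h
  · rw [max_eq_right h, min_eq_left h]
    constructor <;> nlinarith
  · rw [max_eq_left h, min_eq_right h]
    constructor <;> nlinarith

/-- Multi-step dependency-preserving Taylor-model propagation: shared-slope affine
bounds composed step by step keep every iterate expressed in terms of the same
initial-set parameter `z`, with the stated recursion on centers, slopes, and
interval remainders. -/
theorem tm_multistep_propagation {n nz : ℕ} (Z : Set (Fin nz → ℝ)) (H : ℕ)
    (f : ℕ → (Fin n → ℝ) → (Fin n → ℝ))
    (c : ℕ → Fin n → ℝ) (A : ℕ → Matrix (Fin n) (Fin nz) ℝ)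
    (l u : ℕ → Fin n → ℝ) (hlu : ∀ k ≤ H, ∀ i, l k i ≤ u k i)
    (W : ℕ → Matrix (Fin n) (Fin n) ℝ) (bl bu : ℕ → Fin n → ℝ)
    (hb : ∀ k < H, ∀ z ∈ Z, ∀ r : Fin n → ℝ,
      (∀ i, l k i ≤ r i ∧ r i ≤ u k i) → ∀ j,
      (W k).mulVec (c k + (A k).mulVec z + r) j + bl k j
          ≤ f k (c k + (A k).mulVec z + r) j ∧
      f k (c k + (A k).mulVec z + r) j
          ≤ (W k).mulVec (c k + (A k).mulVec z + r) j + bu k j)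
    (hc : ∀ k < H, c (k + 1) = (W k).mulVec (c k))
    (hA : ∀ k < H, A (k + 1) = W k * A k)
    (hl : ∀ k < H, ∀ j, l (k + 1) j
      = bl k j + ∑ i, (max (W k j i) 0 * l k i + min (W k j i) 0 * u k i))
    (hu : ∀ k < H, ∀ j, u (k + 1) j
      = bu k j + ∑ i, (max (W k j i) 0 * u k i + min (W k j i) 0 * l k i))
    (z : Fin nz → ℝ) (hz : z ∈ Z)
    (r₀ : Fin n → ℝ) (hr₀ : ∀ i, l 0 i ≤ r₀ i ∧ r₀ i ≤ u 0 i)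
    (x : ℕ → Fin n → ℝ) (hx0 : x 0 = c 0 + (A 0).mulVec z + r₀)
    (hxs : ∀ k < H, x (k + 1) = f k (x k)) :
    ∀ k ≤ H, ∃ r : Fin n → ℝ, (∀ i, l k i ≤ r i ∧ r i ≤ u k i) ∧
      x k = c k + (A k).mulVec z + r := by
  intro k
  induction k with
  | zero => exact fun _ => ⟨r₀, hr₀, hx0⟩
  | succ k ih =>
    intro hk
    have hkH : k < H := hk
    obtain ⟨r, hr, hx⟩ := ih hkH.le
    refine ⟨x (k + 1) - (c (k + 1) + (A (k + 1)).mulVec z), fun j => ?_, by abel⟩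
    have hbj := hb k hkH z hz r hr j
    rw [← hx, ← hxs k hkH] at hbj
    have hW : (W k).mulVec (x k) j
        = (c (k + 1) + (A (k + 1)).mulVec z) j + ∑ i, W k j i * r i := by
      rw [hx, hc k hkH, hA k hkH, Matrix.mulVec_add, Matrix.mulVec_add, Matrix.mulVec_mulVec]
      rfl
    have h1 := Finset.sum_le_sum fun i (_ : i ∈ Finset.univ) =>
      (mul_mem_interval (W k j i) (hr i).1 (hr i).2).1
    have h2 := Finset.sum_le_sum fun i (_ : i ∈ Finset.univ) =>
      (mul_mem_interval (W k j i) (hr i).1 (hr i).2).2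
    rw [hl k hkH, hu k hkH, Pi.sub_apply]
    constructor <;> linarith [hbj.1, hbj.2]
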